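/- Let X be an implicative-orthomodular algebra. For all x, y ∈ X, x→(y ⊓ x) = x→y. -/

import Mathlib

/-!
The operation `→` satisfies contraposition, which turns (IOM) into the identity
`u → (u → a)* = a*` for every `u` of the form `b → a` (`imp_neg_imp`).
Contraposition also rewrites the left-hand side `x → (y ⊓ x)` as `((x → y) → x*) → x*`, and
`x → y = y* → x*`, so the claim becomes the absorption law `((c → a) → a) → a = c → a`
(`imp_imp_imp`) at `a = x*`, `c = y*`. Absorption follows from two uses of `imp_neg_imp`: with
`u = c → a` and `v = u → a`, the first gives `v → u* = a*`; since also `v = a* → u*`, the second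
gives `v → a = v → (v → u*)* = u`.
-/

/-- An involutive BE algebra `(X, →, 0, 1)`. -/
structure InvBE (X : Type*) where
  imp : X → X → X
  one : X
  zero : X
  imp_self : ∀ x, imp x x = one
  imp_one : ∀ x, imp x one = one
  one_imp : ∀ x, imp one x = x
  exchange : ∀ x y z, imp x (imp y z) = imp y (imp x z)
  zero_imp : ∀ x, imp zero x = one
  imp_involutive : ∀ x, imp (imp x zero) zero = x

namespace InvBE

variable {X : Type*} (A : InvBE X)

/-- `x* := x → 0`. -/
def neg (x : X) : X := A.imp x A.zero

/-- `x ⊓ y := ((x* → y*) → y*)*`. -/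
def inf (x y : X) : X := A.neg (A.imp (A.imp (A.neg x) (A.neg y)) (A.neg y))

/-- `x ∪ y := (x → y) → y`. -/
def sup (x y : X) : X := A.imp (A.imp x y) y

/-- `x ⊙ y := (x → y*)*`. -/
def odot (x y : X) : X := A.neg (A.imp x (A.neg y))

/-- `x ⊕ y := (x* ⊙ y*)*`. -/
def oplus (x y : X) : X := A.neg (A.odot (A.neg x) (A.neg y))

/-- `x ≤_Q y` iff `x = x ⊓ y`. -/
def leQ (x y : X) : Prop := x = A.inf x y

/-- `x ≤ y` iff `x → y = 1`. -/
def le (x y : X) : Prop := A.imp x y = A.one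

/-- (IOM): `x ⊓ (y → x) = x` for all `x, y`. -/
def IOM : Prop := ∀ x y, A.inf x (A.imp y x) = x

/-- (QW): `x → ((x ⊓ y) ⊓ (z ⊓ x)) = (x → y) ⊓ (x → z)` for all `x, y, z`. -/
def QW : Prop :=
  ∀ x y z, A.imp x (A.inf (A.inf x y) (A.inf z x)) = A.inf (A.imp x y) (A.imp x z)

/-- A filter: nonempty, closed under `⊙`, upward closed for `≤_Q`. -/
def IsFilter (F : Set X) : Prop :=
  F.Nonempty ∧ (∀ x ∈ F, ∀ y ∈ F, A.odot x y ∈ F) ∧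
    (∀ x ∈ F, ∀ y : X, A.leQ x y → y ∈ F)

/-- A deductive system: contains `1` and is closed under modus ponens. -/
def IsDS (F : Set X) : Prop :=
  A.one ∈ F ∧ ∀ x y : X, x ∈ F → A.imp x y ∈ F → y ∈ F

/-- `pow x n` is the `⊙`-product of `n + 1` copies of `x`, i.e. `x^(n+1)`. -/
def pow (x : X) : ℕ → X
  | 0 => x
  | n + 1 => A.odot x (pow x n)

/-- A maximal filter: proper and not contained in any other proper filter. -/
def IsMaximalFilter (F : Set X) : Prop :=
  A.IsFilter F ∧ F ≠ Set.univ ∧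
    ∀ G : Set X, A.IsFilter G → F ⊆ G → G ≠ Set.univ → G = F

/-- A strongly maximal filter: for every `x ∉ F` there is `n ≥ 1` with `(xⁿ)* ∈ F`. -/
def IsStronglyMaximalFilter (F : Set X) : Prop :=
  A.IsFilter F ∧ ∀ x : X, x ∉ F → ∃ n : ℕ, A.neg (A.pow x n) ∈ F

/-- `x ≡_F y` iff there is `f` with `x, y ≤_Q f` and `f → x, f → y ∈ F`. -/
def cong (F : Set X) (x y : X) : Prop :=
  ∃ f : X, A.leQ x f ∧ A.leQ y f ∧ A.imp f x ∈ F ∧ A.imp f y ∈ F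

end InvBE

namespace InvBE

variable {X : Type*} (A : InvBE X)

theorem neg_neg (x : X) : A.neg (A.neg x) = x := A.imp_involutive x

theorem imp_neg_comm (x y : X) : A.imp x (A.neg y) = A.imp y (A.neg x) := A.exchange x y A.zero

theorem neg_imp_neg (x y : X) : A.imp (A.neg x) (A.neg y) = A.imp y x := by
  rw [imp_neg_comm, neg_neg]

/-- The form of (IOM) obtained by contraposition, free of `⊓`. -/
theorem imp_neg_imp (hA : A.IOM) (a b : X) :
    A.imp (A.imp b a) (A.neg (A.imp (A.imp b a) a)) = A.neg a := by
  have h := congrArg A.neg (hA a b)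
  rwa [inf, neg_neg, neg_imp_neg, imp_neg_comm] at h

/-- The absorption law `((c → a) → a) → a = c → a`. -/
theorem imp_imp_imp (hA : A.IOM) (a c : X) :
    A.imp (A.imp (A.imp c a) a) a = A.imp c a := by
  have h₁ := A.imp_neg_imp hA a c
  rw [imp_neg_comm] at h₁
  have h₂ := A.imp_neg_imp hA (A.neg (A.imp c a)) (A.neg a)
  rwa [neg_imp_neg, h₁, neg_neg, neg_neg] at h₂

end InvBE

/-- In an IOM algebra, `x → (y ⊓ x) = x → y`. -/
theorem stmt_6 {X : Type*} (A : InvBE X) (hA : A.IOM) :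
    ∀ x y : X, A.imp x (A.inf y x) = A.imp x y := by
  intro x y
  rw [InvBE.inf, A.imp_neg_comm x, A.imp_imp_imp hA, A.neg_imp_neg]
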